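/- Let M_{n,2} denote the set of self-dual binary codes of length n (n even), with |M_{n,2}| = Π_{i=1}^{n/2−1}(2^i + 1). Then the average of the genus-g complete weight enumerators over M_{n,2} is E^(g)_{n,2}({x_v}) = Σ_A [1/((2^{n/2−1}+1)···(2^{n/2−dim_2(A)+1}+1))] · (n choose A) · x^A, where the sum runs over all type-I-admissible tuples A = (e_v)_{v∈𝔽_2^g}, (n choose A) = n!/Π_v e_v!, x^A = Π_v x_v^{e_v}, and dim_2(A) = dim_{𝔽_2}⟨{(1,v) : e_v > 0}⟩. -/

import Mathlib

open Matrix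

noncomputable section

/-- The composition `e_v(𝔠) = |{j : (c_j^{(1)},…,c_j^{(g)}) = v}|`. -/
def eTup (p n g : ℕ) (c : Fin g → (Fin n → ZMod p)) (v : Fin g → ZMod p) : ℕ :=
  (Finset.univ.filter fun j : Fin n => ∀ i, c i j = v i).card

/-- The integral quadratic form `v S v^T`, computed over `ℤ` using representatives
`{0,1}`. -/
def quadInt (p g : ℕ) (v : Fin g → ZMod p) (S : Matrix (Fin g) (Fin g) ℤ) : ℤ :=
  ∑ i, ∑ j, ((v i).val : ℤ) * S i j * ((v j).val : ℤ)

/-- A tuple `A = (e_v)_{v∈𝔽_2^g}` is type-I-admissible (for length `n`):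
`Σ_v e_v = n`, `Σ_v e_v (v S_d v^T) ≡ 0 mod 2` for all integral diagonal `S_d`, and
`Σ_v e_v (v S_nd v^T) ≡ 0 mod 4` for all integral symmetric `S_nd` with zero diagonal. -/
def TypeIAdmissible (n g : ℕ) (A : (Fin g → ZMod 2) → ℕ) : Prop :=
  (∑ v, A v = n) ∧
  (∀ d : Fin g → ℤ, (2 : ℤ) ∣ ∑ v : Fin g → ZMod 2,
      (A v : ℤ) * quadInt 2 g v (Matrix.diagonal d)) ∧
  (∀ S : Matrix (Fin g) (Fin g) ℤ, S.IsSymm → (∀ i, S i i = 0) →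
      (4 : ℤ) ∣ ∑ v : Fin g → ZMod 2, (A v : ℤ) * quadInt 2 g v S)

/-- `dim_2(A) = dim_{𝔽_2}⟨{(1,v) : e_v > 0}⟩`. -/
def dim2 (g : ℕ) (A : (Fin g → ZMod 2) → ℕ) : ℕ :=
  Module.finrank (ZMod 2)
    (Submodule.span (ZMod 2)
      {w : Fin (g + 1) → ZMod 2 | ∃ v, 0 < A v ∧ w = Fin.cons 1 v})

/-!
After exchanging the two sums, a `g`-tuple `c` of words contributes its monomial times the
proportion of self-dual codes containing every `c i`. A binary self-dual code contains the
all-ones word `1`, so these are the self-dual codes containing `D = ⟨1, c i⟩`. They exist only if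
`D` is self-orthogonal, i.e. if all `c i ⬝ᵥ c k` vanish. In terms of the composition
`A = (e_v)` of `c`, the sums `∑ e_v (v S vᵀ)` pair `S` with the integral Gram matrix of the lifted
words, and all entries of that symmetric matrix are even exactly when `A` is type-I-admissible.

The self-dual codes containing a self-orthogonal `D ∋ 1` are counted by induction on the
codimension of `D` in a self-dual code, double counting the pairs `(C, u)` with
`u ∈ C ∖ D`: since `1 ∈ D`, every `u ∈ Dᗮ` is isotropic, so `D + ⟨u⟩` is again self-orthogonal. The
proportion depends on `dim D` only, and `dim D = dim₂ A` because both are ranks of the matrix with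
rows `1, c 1, …, c g`. Finally, the number of tuples with composition `A` is the multinomial
coefficient `n choose A`.
-/

open Module
open LinearMap (BilinForm)
open scoped Finset

section DoubleCounting

lemma ncard_mul_eq_ncard_mul {α β : Type*} [Finite α] [Finite β] (r : α → β → Prop)
    {s : Set α} {t : Set β} {m n : ℕ} (hm : ∀ a ∈ s, {b ∈ t | r a b}.ncard = m)
    (hn : ∀ b ∈ t, {a ∈ s | r a b}.ncard = n) : s.ncard * m = t.ncard * n := by
  classical
  lift s to Finset α using s.toFinite
  lift t to Finset β using t.toFinite
  simp only [Set.ncard_coe_finset]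
  refine Finset.card_mul_eq_card_mul r (fun a ha => ?_) fun b hb => ?_
  · rw [← hm a ha, ← Set.ncard_coe_finset, Finset.coe_bipartiteAbove]
    rfl
  · rw [← hn b hb, ← Set.ncard_coe_finset, Finset.coe_bipartiteBelow]
    rfl

end DoubleCounting

section SelfDual

variable {R M : Type*}

lemma mem_orthogonal_span_iff [CommSemiring R] [AddCommMonoid M] [Module R M]
    {B : BilinForm R M} {s : Set M} {x : M} :
    x ∈ B.orthogonal (Submodule.span R s) ↔ ∀ a ∈ s, B a x = 0 :=
  Submodule.span_le (p := LinearMap.ker (B.flip x))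

lemma span_le_orthogonal_span_iff [CommSemiring R] [AddCommMonoid M] [Module R M]
    {B : BilinForm R M} {s : Set M} :
    Submodule.span R s ≤ B.orthogonal (Submodule.span R s) ↔ ∀ a ∈ s, ∀ b ∈ s, B a b = 0 := by
  rw [Submodule.span_le]
  exact (forall₂_congr fun b _ => mem_orthogonal_span_iff).trans
    ⟨fun h a ha b hb => h b hb a ha, fun h b hb a ha => h a ha b hb⟩

lemma sup_span_singleton_le_orthogonal [CommRing R] [AddCommGroup M] [Module R M]
    {B : BilinForm R M} {D : Submodule R M} {u : M} (hD : D ≤ B.orthogonal D)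
    (hBD : (B.restrict (B.orthogonal D)).IsAlt) (hu : u ∈ B.orthogonal D) :
    D ⊔ Submodule.span R {u} ≤ B.orthogonal (D ⊔ Submodule.span R {u}) := by
  have huu : B u u = 0 := hBD ⟨u, hu⟩
  have huD : ∀ d ∈ D, B u d = 0 := fun d hd => hBD.isRefl ⟨d, hD hd⟩ ⟨u, hu⟩ (hu d hd)
  rw [← D.span_eq, ← Submodule.span_union, span_le_orthogonal_span_iff]
  rintro a (ha | rfl) b (hb | rfl)
  exacts [hD hb a ha, hu a ha, huD b hb, huu]

/-- A submodule equal to its own orthogonal complement. For the standard dot product these are the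
self-dual codes; for a symplectic form they are the Lagrangian subspaces. -/
def IsSelfDual [CommSemiring R] [AddCommMonoid M] [Module R M] (B : BilinForm R M)
    (C : Submodule R M) : Prop :=
  B.orthogonal C = C

variable {K V : Type*} [Field K] [AddCommGroup V] [Module K V] [FiniteDimensional K V]

lemma finrank_orthogonal_add_finrank {B : BilinForm K V} (hB : B.Nondegenerate)
    (D : Submodule K V) : finrank K (B.orthogonal D) + finrank K D = finrank K V := by
  rw [BilinForm.finrank_orthogonal hB, Nat.sub_add_cancel D.finrank_le]

lemma IsSelfDual.two_mul_finrank {B : BilinForm K V} (hB : B.Nondegenerate) {C : Submodule K V}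
    (hC : IsSelfDual B C) : 2 * finrank K C = finrank K V := by
  have h := finrank_orthogonal_add_finrank hB C
  rw [hC] at h
  omega

lemma isSelfDual_iff_eq_of_le {B : BilinForm K V} (hB : B.Nondegenerate) {C D : Submodule K V}
    (hD : D ≤ B.orthogonal D) (hV : finrank K V = 2 * finrank K D) (hDC : D ≤ C) :
    IsSelfDual B C ↔ C = D := by
  constructor
  · intro hC
    have hC' := hC.two_mul_finrank hB
    exact (Submodule.eq_of_le_of_finrank_eq hDC (by omega)).symm
  · rintro rfl
    have hC := finrank_orthogonal_add_finrank hB C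
    exact (Submodule.eq_of_le_of_finrank_eq hD (by omega)).symm

variable [Finite K]

lemma ncard_submodule_sdiff {D W : Submodule K V} {k : ℕ} (hDW : D ≤ W)
    (hk : finrank K W = finrank K D + k) :
    ((W : Set V) \ D).ncard = Nat.card K ^ finrank K D * (Nat.card K ^ k - 1) := by
  have : Finite V := Module.finite_of_finite K
  have hcard (U : Submodule K V) : (U : Set V).ncard = Nat.card K ^ finrank K U :=
    Module.natCard_eq_pow_finrank
  rw [Set.ncard_sdiff hDW, hcard, hcard, hk, pow_add, Nat.mul_sub_one]

/-- Double counting of the pairs `u ∈ C` with `u` orthogonal to `D` but not in `D`. -/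
lemma ncard_isSelfDual_ge_eq_mul {B : BilinForm K V} (hB : B.Nondegenerate)
    {D : Submodule K V} (hD : D ≤ B.orthogonal D) {m P : ℕ} (hm : m ≠ 0)
    (hV : finrank K V = 2 * (finrank K D + m))
    (hP : ∀ u ∈ B.orthogonal D, u ∉ D →
      {C | IsSelfDual B C ∧ D ⊔ Submodule.span K {u} ≤ C}.ncard = P) :
    {C | IsSelfDual B C ∧ D ≤ C}.ncard = P * (Nat.card K ^ m + 1) := by
  have : Finite V := Module.finite_of_finite K
  set q := Nat.card K
  have hvectors : ∀ C ∈ {C | IsSelfDual B C ∧ D ≤ C},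
      {u ∈ (B.orthogonal D : Set V) \ D | u ∈ C}.ncard = q ^ finrank K D * (q ^ m - 1) := by
    rintro C ⟨hC, hDC⟩
    have hCD : C ≤ B.orthogonal D := hC.ge.trans (BilinForm.orthogonal_le hDC)
    have hdim := hC.two_mul_finrank hB
    rw [← ncard_submodule_sdiff hDC (by omega)]
    congr 1
    ext u
    exact ⟨fun h => ⟨h.2, h.1.2⟩, fun h => ⟨⟨hCD h.1, h.2⟩, h.1⟩⟩
  have hcodes : ∀ u ∈ (B.orthogonal D : Set V) \ D,
      {C ∈ {C | IsSelfDual B C ∧ D ≤ C} | u ∈ C}.ncard = P := by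
    rintro u ⟨hu, huD⟩
    rw [← hP u hu huD]
    congr 1
    ext C
    simp only [Set.mem_ofPred_eq, sup_le_iff, Submodule.span_singleton_le_iff_mem, and_assoc]
  have hpairs := ncard_mul_eq_ncard_mul _ hvectors hcodes
  have hdim := finrank_orthogonal_add_finrank hB D
  rw [ncard_submodule_sdiff hD (k := m * 2) (by omega), pow_mul, ← one_pow 2, Nat.sq_sub_sq,
    one_pow] at hpairs
  have hq : 1 < q ^ m := Nat.one_lt_pow hm Finite.one_lt_card
  have hpos : 0 < q ^ finrank K D * (q ^ m - 1) := by
    have := Nat.card_pos (α := K)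
    have := Nat.sub_pos_of_lt hq
    positivity
  refine Nat.eq_of_mul_eq_mul_right hpos (hpairs.trans ?_)
  ring

theorem ncard_isSelfDual_ge {B : BilinForm K V} (hB : B.Nondegenerate) (m : ℕ)
    {D : Submodule K V} (hD : D ≤ B.orthogonal D) (hBD : (B.restrict (B.orthogonal D)).IsAlt)
    (hV : finrank K V = 2 * (finrank K D + m)) :
    {C | IsSelfDual B C ∧ D ≤ C}.ncard = ∏ i ∈ Finset.Icc 1 m, (Nat.card K ^ i + 1) := by
  induction m generalizing D with
  | zero =>
    have : {C | IsSelfDual B C ∧ D ≤ C} = {D} := by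
      ext C
      refine ⟨fun h => (isSelfDual_iff_eq_of_le hB hD hV h.2).1 h.1, ?_⟩
      rintro rfl
      exact ⟨(isSelfDual_iff_eq_of_le hB hD hV le_rfl).2 rfl, le_rfl⟩
    simp [this]
  | succ m ih =>
    rw [Finset.prod_Icc_succ_top (by omega)]
    refine ncard_isSelfDual_ge_eq_mul hB hD m.succ_ne_zero hV fun u hu huD => ?_
    have hmono : B.orthogonal (D ⊔ Submodule.span K {u}) ≤ B.orthogonal D :=
      BilinForm.orthogonal_le le_sup_left
    have hdim := Submodule.finrank_sup_span_singleton (K := K) huD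
    exact ih (sup_span_singleton_le_orthogonal hD hBD hu) (fun v => hBD ⟨v, hmono v.2⟩) (by omega)

end SelfDual

section BinaryCodes

variable {ι : Type*} [Fintype ι]

/-- The standard dot product as a bilinear form, so that duality of codes is orthogonality. -/
abbrev dotForm (R ι : Type*) [CommRing R] [Fintype ι] : BilinForm R (ι → R) :=
  dotProductBilin R R

lemma nondegenerate_dotForm (R : Type*) [CommRing R] : (dotForm R ι).Nondegenerate :=
  ⟨fun v hv => dotProduct_eq_zero v hv,
    fun v hv => dotProduct_eq_zero v fun w => (dotProduct_comm v w).trans (hv w)⟩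

lemma isSelfDual_dotForm_iff {R : Type*} [CommRing R] {C : Submodule R (ι → R)} :
    IsSelfDual (dotForm R ι) C ↔ (C : Set (ι → R)) = {c' | ∀ c ∈ C, c ⬝ᵥ c' = 0} :=
  SetLike.coe_set_eq.symm.trans eq_comm

lemma dotProduct_self_eq_one_dotProduct (u : ι → ZMod 2) : u ⬝ᵥ u = 1 ⬝ᵥ u := by
  have h : ∀ a : ZMod 2, a * a = 1 * a := by decide
  simp only [dotProduct, h, Pi.one_apply]

lemma IsSelfDual.one_mem {C : Submodule (ZMod 2) (ι → ZMod 2)}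
    (hC : IsSelfDual (dotForm (ZMod 2) ι) C) : 1 ∈ C := by
  have hCC : ∀ u ∈ C, ∀ v ∈ C, u ⬝ᵥ v = 0 := fun u hu v hv => hC.ge hv u hu
  refine hC.le fun u hu => (dotProduct_comm u 1).trans ?_
  exact (dotProduct_self_eq_one_dotProduct u).symm.trans (hCC u hu u hu)

lemma isAlt_restrict_orthogonal_of_one_mem {D : Submodule (ZMod 2) (ι → ZMod 2)} (h1 : 1 ∈ D) :
    ((dotForm (ZMod 2) ι).restrict ((dotForm (ZMod 2) ι).orthogonal D)).IsAlt :=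
  fun u => (dotProduct_self_eq_one_dotProduct u.1).trans (u.2 1 h1)

lemma prod_Icc_sub_mul_prod_Icc_reflect {M : Type*} [CommMonoid M] (f : ℕ → M) {N d : ℕ}
    (hdN : d ≤ N) (hd : d = 0 → N = 0) :
    (∏ i ∈ Finset.Icc 1 (N - d), f i) * ∏ j ∈ Finset.Icc 1 (d - 1), f (N - j) =
      ∏ i ∈ Finset.Icc 1 (N - 1), f i := by
  obtain rfl | hpos := d.eq_zero_or_pos
  · simp [hd rfl]
  have hIcc (k : ℕ) (hk : 0 < k) : Finset.Icc 1 (k - 1) = Finset.Ico 1 k := by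
    ext; simp only [Finset.mem_Icc, Finset.mem_Ico]; omega
  rw [hIcc d hpos, hIcc N (by omega), Finset.prod_Ico_reflect f 1 (by omega),
    Nat.add_sub_cancel, ← Finset.prod_Ico_consecutive f (by omega : 1 ≤ N + 1 - d) (by omega),
    ← hIcc (N + 1 - d) (by omega)]
  congr 3
  omega

theorem ncard_isSelfDual_dotForm_ge_mul (hι : 2 ∣ Fintype.card ι)
    {D : Submodule (ZMod 2) (ι → ZMod 2)} (hD : D ≤ (dotForm (ZMod 2) ι).orthogonal D)
    (h1 : 1 ∈ D) :
    {C | IsSelfDual (dotForm (ZMod 2) ι) C ∧ D ≤ C}.ncard *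
        ∏ j ∈ Finset.Icc 1 (finrank (ZMod 2) D - 1), (2 ^ (Fintype.card ι / 2 - j) + 1) =
      ∏ i ∈ Finset.Icc 1 (Fintype.card ι / 2 - 1), (2 ^ i + 1) := by
  have hB := nondegenerate_dotForm (ι := ι) (ZMod 2)
  have hV : finrank (ZMod 2) (ι → ZMod 2) = Fintype.card ι := finrank_pi _
  have hdim := finrank_orthogonal_add_finrank hB D
  have hle := Submodule.finrank_mono hD
  have hpos : finrank (ZMod 2) D = 0 → Fintype.card ι / 2 = 0 := fun h => by
    have h0 : (1 : ι → ZMod 2) = 0 := by simpa [Submodule.finrank_eq_zero.1 h] using h1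
    have : IsEmpty ι := ⟨fun i => one_ne_zero (congrFun h0 i)⟩
    simp
  rw [ncard_isSelfDual_ge hB (Fintype.card ι / 2 - finrank (ZMod 2) D) hD
    (isAlt_restrict_orthogonal_of_one_mem h1) (by omega), Nat.card_zmod]
  exact prod_Icc_sub_mul_prod_Icc_reflect (fun i => 2 ^ i + 1) (by omega) hpos

theorem ncard_isSelfDual_dotForm (hι : 2 ∣ Fintype.card ι) :
    {C | IsSelfDual (dotForm (ZMod 2) ι) C}.ncard =
      ∏ i ∈ Finset.Icc 1 (Fintype.card ι / 2 - 1), (2 ^ i + 1) := by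
  have h11 : (1 : ι → ZMod 2) ⬝ᵥ 1 = 0 := by
    rw [one_dotProduct_one]
    exact (ZMod.natCast_eq_zero_iff _ 2).2 hι
  have hdim : finrank (ZMod 2) (Submodule.span (ZMod 2) {(1 : ι → ZMod 2)}) ≤ 1 := by
    simpa using finrank_span_le_card {(1 : ι → ZMod 2)}
  have hge : {C | IsSelfDual (dotForm (ZMod 2) ι) C ∧ Submodule.span (ZMod 2) {1} ≤ C} =
      {C | IsSelfDual (dotForm (ZMod 2) ι) C} := by
    ext C
    simpa using IsSelfDual.one_mem
  have h := ncard_isSelfDual_dotForm_ge_mul hι (D := Submodule.span (ZMod 2) {1})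
    (span_le_orthogonal_span_iff.2 (by simpa using h11)) (Submodule.mem_span_singleton_self 1)
  rwa [hge, Nat.sub_eq_zero_of_le hdim, Finset.Icc_eq_empty (by simp), Finset.prod_empty,
    mul_one] at h

end BinaryCodes

section Composition

open MvPolynomial in
lemma card_filter_card_fiber_eq {ι α : Type*} [Fintype ι] [DecidableEq ι] [Fintype α]
    [DecidableEq α] {A : α → ℕ} (hA : ∑ v, A v = Fintype.card ι) :
    #{f : ι → α | (fun v => #{j | f j = v}) = A} = Nat.multinomial Finset.univ A := by
  let d : α →₀ ℕ := Finsupp.equivFunOnFinite.symm A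
  have hexpand : (∑ v, X v : MvPolynomial α ℕ) ^ Fintype.card ι = ∑ f : ι → α, ∏ j, X (f j) := by
    rw [← Fintype.piFinset_univ, ← Finset.prod_univ_sum, Finset.prod_const, Finset.card_univ]
  have hmonomial (f : ι → α) : (∏ j, X (f j) : MvPolynomial α ℕ) =
      monomial (Finsupp.equivFunOnFinite.symm fun v => #{j | f j = v}) 1 := by
    have hexponent : ∑ j, Finsupp.single (f j) 1 =
        Finsupp.equivFunOnFinite.symm fun v => #{j | f j = v} := by
      ext v
      simp [Finsupp.finsetSum_apply, Finsupp.single_apply]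
    rw [← hexponent, monomial_sum_one]
    rfl
  have hd : (d.sum fun _ m => m) = Fintype.card ι := by
    rw [← hA, Finsupp.sum_fintype _ _ fun _ => rfl]
    rfl
  have hcoeff := coeff_sum_X_pow_of_fintype (R := ℕ) d (Fintype.card ι)
  rw [if_pos hd, Finsupp.multinomial_eq_of_support_subset (Finset.subset_univ _), hexpand] at hcoeff
  simp only [hmonomial, coeff_sum, coeff_monomial, d, EmbeddingLike.apply_eq_iff_eq] at hcoeff
  rw [Finset.card_filter]
  exact hcoeff

lemma eTup_eq_card_fiber {p n g : ℕ} (c : Fin g → Fin n → ZMod p) :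
    eTup p n g c = fun v => #{j | (fun i => c i j) = v} := by
  funext v
  simp only [eTup, funext_iff]

lemma sum_eTup_smul {p n g : ℕ} [NeZero p] {M : Type*} [AddCommMonoid M]
    (c : Fin g → Fin n → ZMod p) (F : (Fin g → ZMod p) → M) :
    ∑ v, eTup p n g c v • F v = ∑ j, F fun i => c i j := by
  simp only [eTup_eq_card_fiber]
  rw [← Finset.sum_fiberwise Finset.univ (fun j i => c i j)]
  refine Finset.sum_congr rfl fun v _ => (Finset.sum_eq_card_nsmul fun j hj => ?_).symm
  rw [(Finset.mem_filter.1 hj).2]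

lemma sum_eTup {p n g : ℕ} [NeZero p] (c : Fin g → Fin n → ZMod p) : ∑ v, eTup p n g c v = n := by
  simpa using sum_eTup_smul c fun _ => (1 : ℕ)

lemma card_filter_eTup_eq {p n g : ℕ} [NeZero p] {A : (Fin g → ZMod p) → ℕ} (hA : ∑ v, A v = n) :
    #{c : Fin g → Fin n → ZMod p | eTup p n g c = A} = Nat.multinomial Finset.univ A := by
  rw [← card_filter_card_fiber_eq (ι := Fin n) (by simpa using hA)]
  exact Finset.card_equiv (Equiv.piComm _) fun c => by
    rw [Finset.mem_filter_univ, Finset.mem_filter_univ, eTup_eq_card_fiber]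
    rfl

lemma sum_comp_eTup {p n g : ℕ} [NeZero p] {M : Type*} [AddCommMonoid M]
    (F : ((Fin g → ZMod p) → ℕ) → M) :
    ∑ c : Fin g → Fin n → ZMod p, F (eTup p n g c) =
      ∑ A ∈ Finset.piAntidiag Finset.univ n, Nat.multinomial Finset.univ A • F A := by
  have hmaps : ∀ c ∈ (Finset.univ : Finset (Fin g → Fin n → ZMod p)),
      eTup p n g c ∈ Finset.piAntidiag Finset.univ n := fun c _ => by simp [sum_eTup]
  rw [← Finset.sum_fiberwise_of_maps_to hmaps]
  refine Finset.sum_congr rfl fun A hA => ?_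
  rw [← card_filter_eTup_eq (Finset.mem_piAntidiag.1 hA).1]
  exact Finset.sum_eq_card_nsmul fun c hc => by rw [(Finset.mem_filter.1 hc).2]

end Composition

section SymmetricMatrix

variable {κ : Type*} [Fintype κ]

lemma two_dvd_sum_sum_of_isSymm {T : Matrix κ κ ℤ} (hT : T.IsSymm) (h0 : ∀ i, T i i = 0) :
    2 ∣ ∑ i, ∑ k, T i k := by
  suffices h : ((∑ i, ∑ k, T i k : ℤ) : ZMod 2) = 0 from
    (ZMod.intCast_zmod_eq_zero_iff_dvd _ 2).1 h
  push_cast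
  rw [← Fintype.sum_prod_type']
  refine Finset.sum_involution (fun p _ => p.swap) (fun p _ => ?_) (fun p _ hp hswap => ?_)
    (fun _ _ => Finset.mem_univ _) (fun p _ => p.swap_swap)
  · rw [Prod.fst_swap, Prod.snd_swap, hT.apply]
    exact CharTwo.add_self_eq_zero _
  · rw [← congrArg Prod.fst hswap, Prod.fst_swap, h0, Int.cast_zero] at hp
    exact hp rfl

lemma four_dvd_sum_sum_mul_of_isSymm {S G : Matrix κ κ ℤ} (hS : S.IsSymm) (h0 : ∀ i, S i i = 0)
    (hG : G.IsSymm) (h2 : ∀ i k, 2 ∣ G i k) : 4 ∣ ∑ i, ∑ k, S i k * G i k := by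
  choose H hH using h2
  have hHsymm (i k : κ) : H k i = H i k := by
    have h := hG.apply i k
    rw [hH, hH] at h
    omega
  have hT := two_dvd_sum_sum_of_isSymm (T := Matrix.of fun i k => S i k * H i k)
    (Matrix.IsSymm.ext fun i k => by simp only [Matrix.of_apply, hS.apply, hHsymm])
    fun i => by simp [h0]
  have hdouble : ∑ i, ∑ k, S i k * G i k = 2 * ∑ i, ∑ k, S i k * H i k := by
    simp only [Finset.mul_sum, hH, mul_left_comm]
  rw [hdouble]
  exact mul_dvd_mul_left 2 hT

variable [DecidableEq κ]

lemma sum_sum_single_add_single_mul {R : Type*} [CommRing R] {G : Matrix κ κ R} (hG : G.IsSymm)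
    (i k : κ) :
    ∑ a, ∑ b, (Matrix.single i k 1 + Matrix.single k i 1 : Matrix κ κ R) a b * G a b =
      2 * G i k := by
  simp only [Matrix.add_apply, add_mul, Finset.sum_add_distrib, Matrix.single_apply, ite_mul,
    one_mul, zero_mul, ite_and, Finset.sum_ite_irrel, Finset.sum_ite_eq, Finset.mem_univ, if_true,
    Finset.sum_const_zero]
  rw [hG.apply, two_mul]

lemma forall_two_dvd_iff_of_isSymm {G : Matrix κ κ ℤ} (hG : G.IsSymm) :
    (∀ i k, 2 ∣ G i k) ↔
      (∀ d : κ → ℤ, 2 ∣ ∑ i, ∑ k, Matrix.diagonal d i k * G i k) ∧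
      ∀ S : Matrix κ κ ℤ, S.IsSymm → (∀ i, S i i = 0) → 4 ∣ ∑ i, ∑ k, S i k * G i k := by
  refine ⟨fun h => ⟨fun d => Finset.dvd_sum fun i _ => Finset.dvd_sum fun k _ => (h i k).mul_left _,
    fun S hS h0 => four_dvd_sum_sum_mul_of_isSymm hS h0 hG h⟩, fun ⟨hdiag, hoff⟩ i k => ?_⟩
  obtain rfl | hik := eq_or_ne i k
  · simpa [Matrix.diagonal_apply, Pi.single_apply] using hdiag (Pi.single i 1)
  · have h := hoff (Matrix.single i k 1 + Matrix.single k i 1)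
      (by simp [Matrix.IsSymm, add_comm]) fun a => by
        simp only [Matrix.add_apply, Matrix.single_apply]
        grind
    rw [sum_sum_single_add_single_mul hG] at h
    omega

end SymmetricMatrix

section Admissible

/-- The Gram matrix over `ℤ` of the `{0, …, p - 1}`-valued lifts of the vectors `c i`; pairing it
with `S` gives the sum of `quadInt p g v S` over the columns `v` of `c`. -/
def intGram {κ ι : Type*} [Fintype ι] {p : ℕ} (c : κ → ι → ZMod p) : Matrix κ κ ℤ :=
  Matrix.of fun i k => ∑ j, ((c i j).val : ℤ) * (c k j).val

lemma isSymm_intGram {κ ι : Type*} [Fintype ι] {p : ℕ} (c : κ → ι → ZMod p) :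
    (intGram c).IsSymm :=
  Matrix.IsSymm.ext fun i k => by simp only [intGram, Matrix.of_apply, mul_comm]

lemma dvd_intGram_apply_iff {κ ι : Type*} [Fintype ι] {p : ℕ} [NeZero p]
    (c : κ → ι → ZMod p) (i k : κ) : (p : ℤ) ∣ intGram c i k ↔ c i ⬝ᵥ c k = 0 := by
  rw [← ZMod.intCast_zmod_eq_zero_iff_dvd]
  simp [intGram, dotProduct]

lemma sum_eTup_mul_quadInt {p n g : ℕ} [NeZero p] (c : Fin g → Fin n → ZMod p)
    (S : Matrix (Fin g) (Fin g) ℤ) :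
    ∑ v, (eTup p n g c v : ℤ) * quadInt p g v S = ∑ i, ∑ k, S i k * intGram c i k := by
  simp only [← nsmul_eq_mul]
  rw [sum_eTup_smul c fun v => quadInt p g v S]
  simp only [quadInt, intGram, Matrix.of_apply, Finset.mul_sum]
  rw [Finset.sum_comm]
  refine Finset.sum_congr rfl fun i _ => ?_
  rw [Finset.sum_comm]
  refine Finset.sum_congr rfl fun k _ => Finset.sum_congr rfl fun j _ => ?_
  ring

theorem typeIAdmissible_eTup_iff {n g : ℕ} {c : Fin g → Fin n → ZMod 2} :
    TypeIAdmissible n g (eTup 2 n g c) ↔ ∀ i k, c i ⬝ᵥ c k = 0 := by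
  have hdvd (i k : Fin g) : c i ⬝ᵥ c k = 0 ↔ 2 ∣ intGram c i k := (dvd_intGram_apply_iff c i k).symm
  simp only [TypeIAdmissible, sum_eTup, sum_eTup_mul_quadInt, true_and, hdvd]
  exact (forall_two_dvd_iff_of_isSymm (isSymm_intGram c)).symm

open scoped Classical in
lemma mem_filter_typeIAdmissible {n g : ℕ} {A : (Fin g → ZMod 2) → ℕ} :
    A ∈ Finset.filter (TypeIAdmissible n g) (Finset.piAntidiag Finset.univ n) ↔
      TypeIAdmissible n g A := by
  rw [Finset.mem_filter, Finset.mem_piAntidiag]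
  exact and_iff_right_of_imp fun hA => ⟨hA.1, fun v _ => Finset.mem_univ v⟩

open scoped Classical in
instance TypeIAdmissible.instFintype (n g : ℕ) : Fintype {A // TypeIAdmissible n g A} :=
  Fintype.subtype (Finset.filter (TypeIAdmissible n g) (Finset.piAntidiag Finset.univ n)) fun _ =>
    mem_filter_typeIAdmissible

open scoped Classical in
lemma sum_ite_typeIAdmissible_eTup {n g : ℕ} {M : Type*} [AddCommMonoid M]
    (F : ((Fin g → ZMod 2) → ℕ) → M) :
    (∑ c, if TypeIAdmissible n g (eTup 2 n g c) then F (eTup 2 n g c) else 0) =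
      ∑ A : {A // TypeIAdmissible n g A}, Nat.multinomial Finset.univ A.1 • F A.1 := by
  rw [sum_comp_eTup fun A => if TypeIAdmissible n g A then F A else 0,
    ← Finset.sum_subtype _ (fun _ => mem_filter_typeIAdmissible) fun A =>
      Nat.multinomial Finset.univ A • F A]
  simp only [smul_ite, smul_zero, Finset.sum_filter]

end Admissible

section AugmentedCode

variable {n g : ℕ}

/-- The code spanned by the all-ones word and the words `c i`. It is the row space of the matrix
whose columns are the vectors `(1, v)` spanning the space in `dim2`. -/
def augmentedCode (c : Fin g → Fin n → ZMod 2) : Submodule (ZMod 2) (Fin n → ZMod 2) :=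
  Submodule.span (ZMod 2) (Set.range (Fin.cons 1 c : Fin (g + 1) → Fin n → ZMod 2))

lemma augmentedCode_le_iff {c : Fin g → Fin n → ZMod 2}
    {C : Submodule (ZMod 2) (Fin n → ZMod 2)} :
    augmentedCode c ≤ C ↔ 1 ∈ C ∧ ∀ i, c i ∈ C := by
  simp only [augmentedCode, Submodule.span_le, Set.range_subset_iff, Fin.forall_fin_succ,
    Fin.cons_zero, Fin.cons_succ, SetLike.mem_coe]

lemma augmentedCode_le_orthogonal_iff (hn : 2 ∣ n) {c : Fin g → Fin n → ZMod 2} :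
    augmentedCode c ≤ (dotForm (ZMod 2) (Fin n)).orthogonal (augmentedCode c) ↔
      TypeIAdmissible n g (eTup 2 n g c) := by
  have h11 : (1 : Fin n → ZMod 2) ⬝ᵥ 1 = 0 := by
    rw [one_dotProduct_one, Fintype.card_fin]
    exact (ZMod.natCast_eq_zero_iff n 2).2 hn
  rw [augmentedCode, span_le_orthogonal_span_iff, typeIAdmissible_eTup_iff]
  simp only [Set.forall_mem_range, Fin.forall_fin_succ, Fin.cons_zero, Fin.cons_succ,
    dotProductBilin_apply_apply, h11, true_and, dotProduct_comm _ (1 : Fin n → ZMod 2),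
    ← dotProduct_self_eq_one_dotProduct]
  exact ⟨fun h i => (h.2 i).2, fun h => ⟨fun i => h i i, fun i => ⟨h i i, h i⟩⟩⟩

lemma finrank_augmentedCode (c : Fin g → Fin n → ZMod 2) :
    finrank (ZMod 2) (augmentedCode c) = dim2 g (eTup 2 n g c) := by
  let M : Matrix (Fin (g + 1)) (Fin n) (ZMod 2) := Matrix.of (Fin.cons 1 c)
  have hcol (j : Fin n) : M.col j = Fin.cons 1 fun i => c i j := by
    funext i
    cases i using Fin.cases <;> rfl
  have hcols : {w : Fin (g + 1) → ZMod 2 | ∃ v, 0 < eTup 2 n g c v ∧ w = Fin.cons 1 v} =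
      Set.range M.col := by
    ext w
    simp only [Set.mem_ofPred_eq, Set.mem_range, hcol, eTup_eq_card_fiber, Finset.card_pos,
      Finset.Nonempty, Finset.mem_filter_univ]
    exact ⟨fun ⟨v, ⟨j, hj⟩, hw⟩ => ⟨j, by rw [hj, hw]⟩, fun ⟨j, hj⟩ => ⟨_, ⟨j, rfl⟩, hj.symm⟩⟩
  rw [dim2, hcols, ← M.rank_eq_finrank_span_cols, M.rank_eq_finrank_span_row]
  rfl

variable {𝓜 : Finset (Submodule (ZMod 2) (Fin n → ZMod 2))}

lemma card_eq_prod_of_mem_iff_isSelfDual (hn : 2 ∣ n)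
    (h𝓜 : ∀ C, C ∈ 𝓜 ↔ IsSelfDual (dotForm (ZMod 2) (Fin n)) C) :
    #𝓜 = ∏ i ∈ Finset.Icc 1 (n / 2 - 1), (2 ^ i + 1) := by
  have h𝓜_coe : (𝓜 : Set _) = {C | IsSelfDual (dotForm (ZMod 2) (Fin n)) C} := Set.ext h𝓜
  rw [← Set.ncard_coe_finset, h𝓜_coe, ncard_isSelfDual_dotForm (by rwa [Fintype.card_fin]),
    Fintype.card_fin]

variable {c : Fin g → Fin n → ZMod 2}
  [DecidablePred fun C : Submodule (ZMod 2) (Fin n → ZMod 2) => ∀ i, c i ∈ C]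

lemma filter_mem_eq_empty_of_not_typeIAdmissible (hn : 2 ∣ n)
    (h𝓜 : ∀ C ∈ 𝓜, IsSelfDual (dotForm (ZMod 2) (Fin n)) C)
    (hc : ¬TypeIAdmissible n g (eTup 2 n g c)) : {C ∈ 𝓜 | ∀ i, c i ∈ C} = ∅ := by
  refine Finset.filter_eq_empty_iff.2 fun C hC hcC => hc ?_
  have hle : augmentedCode c ≤ C := augmentedCode_le_iff.2 ⟨(h𝓜 C hC).one_mem, hcC⟩
  exact (augmentedCode_le_orthogonal_iff hn).1
    (hle.trans ((h𝓜 C hC).ge.trans (BilinForm.orthogonal_le hle)))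

lemma card_filter_mem_mul_eq_card (hn : 2 ∣ n)
    (h𝓜 : ∀ C, C ∈ 𝓜 ↔ IsSelfDual (dotForm (ZMod 2) (Fin n)) C)
    (hc : TypeIAdmissible n g (eTup 2 n g c)) :
    #{C ∈ 𝓜 | ∀ i, c i ∈ C} *
        ∏ j ∈ Finset.Icc 1 (dim2 g (eTup 2 n g c) - 1), (2 ^ (n / 2 - j) + 1) = #𝓜 := by
  have hfilter_coe : (({C ∈ 𝓜 | ∀ i, c i ∈ C} : Finset _) : Set _) =
      {C | IsSelfDual (dotForm (ZMod 2) (Fin n)) C ∧ augmentedCode c ≤ C} := by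
    ext C
    rw [Finset.mem_coe, Finset.mem_filter, h𝓜]
    exact and_congr_right fun hC => by rw [augmentedCode_le_iff, and_iff_right hC.one_mem]
  have hcount := ncard_isSelfDual_dotForm_ge_mul (by rwa [Fintype.card_fin])
    ((augmentedCode_le_orthogonal_iff hn).2 hc) (augmentedCode_le_iff.1 le_rfl).1
  rwa [← hfilter_coe, Set.ncard_coe_finset, finrank_augmentedCode, Fintype.card_fin,
    ← card_eq_prod_of_mem_iff_isSelfDual hn h𝓜] at hcount

theorem inv_card_mul_card_filter_mem {K : Type*} [Semifield K] [CharZero K] (hn : 2 ∣ n)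
    (h𝓜 : ∀ C, C ∈ 𝓜 ↔ IsSelfDual (dotForm (ZMod 2) (Fin n)) C)
    [Decidable (TypeIAdmissible n g (eTup 2 n g c))] :
    (#𝓜 : K)⁻¹ * #{C ∈ 𝓜 | ∀ i, c i ∈ C} =
      if TypeIAdmissible n g (eTup 2 n g c) then
        (∏ j ∈ Finset.Icc 1 (dim2 g (eTup 2 n g c) - 1), ((2 : K) ^ (n / 2 - j) + 1))⁻¹
      else 0 := by
  split_ifs with hc
  · have hcount := card_filter_mem_mul_eq_card hn h𝓜 hc
    have hcard : #𝓜 ≠ 0 := by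
      rw [card_eq_prod_of_mem_iff_isSelfDual hn h𝓜]
      exact Finset.prod_ne_zero_iff.2 fun i _ => Nat.succ_ne_zero _
    have hpos : #{C ∈ 𝓜 | ∀ i, c i ∈ C} ≠ 0 := left_ne_zero_of_mul (hcount ▸ hcard)
    rw [← hcount]
    push_cast
    rw [mul_inv, mul_right_comm, inv_mul_cancel₀ (Nat.cast_ne_zero.2 hpos), one_mul]
  · rw [filter_mem_eq_empty_of_not_typeIAdmissible hn (fun C => (h𝓜 C).1) hc]
    simp

end AugmentedCode

section WeightEnumerator

variable {n g : ℕ}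

open scoped Classical in
/-- The complete genus-`g` weight enumerator `W_{g,C}` of a binary code `C`, evaluated at `x`. -/
def genusWeightEnumerator {R : Type*} [CommSemiring R] (g : ℕ)
    (C : Submodule (ZMod 2) (Fin n → ZMod 2)) (x : (Fin g → ZMod 2) → R) : R :=
  ∑ 𝔠 : Fin g → C, ∏ v, x v ^ eTup 2 n g (fun i => (𝔠 i : Fin n → ZMod 2)) v

open scoped Classical in
lemma genusWeightEnumerator_eq_sum_ite {R : Type*} [CommSemiring R]
    (C : Submodule (ZMod 2) (Fin n → ZMod 2)) (x : (Fin g → ZMod 2) → R) :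
    genusWeightEnumerator g C x =
      ∑ c : Fin g → Fin n → ZMod 2,
        if ∀ i, c i ∈ C then ∏ v, x v ^ eTup 2 n g c v else 0 := by
  rw [← Finset.sum_filter, Finset.sum_subtype _ (p := fun c => ∀ i, c i ∈ C) (by simp)]
  exact Fintype.sum_equiv (Equiv.subtypePiEquivPi (p := fun _ u => u ∈ C)).symm _ _ fun _ => rfl

open scoped Classical in
lemma sum_genusWeightEnumerator {R : Type*} [CommSemiring R]
    (𝓜 : Finset (Submodule (ZMod 2) (Fin n → ZMod 2))) (x : (Fin g → ZMod 2) → R) :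
    ∑ C ∈ 𝓜, genusWeightEnumerator g C x =
      ∑ c : Fin g → Fin n → ZMod 2, #{C ∈ 𝓜 | ∀ i, c i ∈ C} * ∏ v, x v ^ eTup 2 n g c v := by
  simp only [genusWeightEnumerator_eq_sum_ite]
  rw [Finset.sum_comm]
  simp only [← Finset.sum_filter, Finset.sum_const, nsmul_eq_mul]

theorem stmt18_general {K : Type*} [Semifield K] [CharZero K] (hn : 2 ∣ n)
    (x : (Fin g → ZMod 2) → K) (𝓜 : Finset (Submodule (ZMod 2) (Fin n → ZMod 2)))
    (h𝓜 : ∀ C, C ∈ 𝓜 ↔ IsSelfDual (dotForm (ZMod 2) (Fin n)) C) :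
    #𝓜 = ∏ i ∈ Finset.Icc 1 (n / 2 - 1), (2 ^ i + 1) ∧
    (#𝓜 : K)⁻¹ * ∑ C ∈ 𝓜, genusWeightEnumerator g C x =
      ∑ A : {A : (Fin g → ZMod 2) → ℕ // TypeIAdmissible n g A},
        (∏ j ∈ Finset.Icc 1 (dim2 g A.1 - 1), ((2 : K) ^ (n / 2 - j) + 1))⁻¹ *
          (Nat.multinomial Finset.univ A.1 : K) * ∏ v, x v ^ A.1 v := by
  classical
  refine ⟨card_eq_prod_of_mem_iff_isSelfDual hn h𝓜, ?_⟩
  rw [sum_genusWeightEnumerator, Finset.mul_sum]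
  simp only [← mul_assoc, inv_card_mul_card_filter_mem hn h𝓜, ite_mul, zero_mul]
  rw [sum_ite_typeIAdmissible_eTup fun A : (Fin g → ZMod 2) → ℕ =>
    (∏ j ∈ Finset.Icc 1 (dim2 g A - 1), ((2 : K) ^ (n / 2 - j) + 1))⁻¹ * ∏ v, x v ^ A v]
  simp only [nsmul_eq_mul, mul_left_comm, mul_assoc]

end WeightEnumerator

/-- The average of genus-`g` complete weight enumerators over the set `𝓜` of self-dual
binary codes of even length `n`: `|𝓜| = Π_{i=1}^{n/2−1}(2^i+1)` and the average equals
`Σ_A (2^{n/2−1}+1)⁻¹⋯(2^{n/2−dim₂(A)+1}+1)⁻¹ (n choose A) x^A` over all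
type-I-admissible tuples `A`. -/
theorem stmt18 (n g : ℕ) (hn : 2 ∣ n) (x : (Fin g → ZMod 2) → ℂ)
    (𝓜 : Finset (Submodule (ZMod 2) (Fin n → ZMod 2)))
    (h𝓜 : ∀ C : Submodule (ZMod 2) (Fin n → ZMod 2),
      C ∈ 𝓜 ↔ (C : Set (Fin n → ZMod 2)) = {c' | ∀ c ∈ C, c ⬝ᵥ c' = 0}) :
    𝓜.card = ∏ i ∈ Finset.Icc 1 (n / 2 - 1), (2 ^ i + 1) ∧
    (𝓜.card : ℂ)⁻¹ * ∑ C ∈ 𝓜, ∑' 𝔠 : Fin g → C,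
        ∏ v : Fin g → ZMod 2,
          x v ^ eTup 2 n g (fun i => ((𝔠 i : Fin n → ZMod 2))) v =
      ∑' A : {A : (Fin g → ZMod 2) → ℕ // TypeIAdmissible n g A},
        (∏ j ∈ Finset.Icc 1 (dim2 g A.1 - 1), ((2 : ℂ) ^ (n / 2 - j) + 1))⁻¹ *
          (Nat.multinomial Finset.univ A.1 : ℂ) * ∏ v, x v ^ A.1 v := by
  classical
  simpa only [tsum_fintype, genusWeightEnumerator] using
    stmt18_general hn x 𝓜 fun C => (h𝓜 C).trans isSelfDual_dotForm_iff.symm
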